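/- Let 0 < q < 1 be real and let x be a real number. For every integer n ≥ 0, the Carlitz type q-Changhee polynomial value satisfies Ch_{n,q}(x) = Σ_{k=0}^{n} Σ_{l=0}^{k} C(k,l) S₁(n,k) [x]_q^{k−l} q^{l x} ℰ_{l,q}(0), where C(k,l) is the binomial coefficient and ℰ_{l,q}(0) are the Carlitz q-Euler numbers. -/

import Mathlib

/-- The `q`-analogue `[x]_q = (1 - q^x)/(1 - q)` (real exponent, via `rpow`). -/
noncomputable def qnum (q x : ℝ) : ℝ := (1 - q ^ x) / (1 - q)

/-- Carlitz `q`-Euler polynomial value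
`ℰ_{n,q}(x) = (1+q) ∑_{m=0}^∞ (-q)^m [m+x]_q^n`. -/
noncomputable def qEuler (q : ℝ) (n : ℕ) (x : ℝ) : ℝ :=
  (1 + q) * ∑' m : ℕ, (-q) ^ m * (qnum q ((m : ℝ) + x)) ^ n

/-- Signed Stirling numbers of the first kind, defined as the coefficients of the
falling factorial: `x(x-1)⋯(x-n+1) = ∑_{k=0}^n S₁(n,k) x^k`. -/
noncomputable def S1 (n k : ℕ) : ℤ := (descPochhammer ℤ n).coeff k

/-- Stirling numbers of the second kind, so that
`x^n = ∑_{k=0}^n S₂(n,k) x(x-1)⋯(x-k+1)`. -/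
def S2 : ℕ → ℕ → ℕ
  | 0, 0 => 1
  | 0, _ + 1 => 0
  | _ + 1, 0 => 0
  | n + 1, k + 1 => S2 n k + (k + 1) * S2 n (k + 1)

/-- Carlitz type `q`-Changhee polynomial value
`Ch_{n,q}(x) = ∑_{k=0}^n S₁(n,k) ℰ_{k,q}(x)`. -/
noncomputable def qChanghee (q : ℝ) (n : ℕ) (x : ℝ) : ℝ :=
  ∑ k ∈ Finset.range (n + 1), (S1 n k : ℝ) * qEuler q k x

/-!
The `q`-numbers satisfy `[x + y]_q = [x]_q + q^x [y]_q`. Expanding `[x + (m + y)]_q^n` by the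
binomial theorem inside the series for `ℰ_{n,q}(x + y)` and summing over `m` gives an addition
formula for the Carlitz `q`-Euler polynomials; the theorem is the `S₁(n,k)`-weighted sum of its
case `y = 0`. Sum and series may be interchanged because `[m + y]_q` converges as `m → ∞`, so that
each series is dominated by a geometric one.
-/

open Filter Finset Topology

lemma qnum_add {q : ℝ} (hq : 0 < q) (x y : ℝ) :
    qnum q (x + y) = qnum q x + q ^ x * qnum q y := by
  unfold qnum
  rw [Real.rpow_add hq]
  ring

lemma qnum_add_pow {q : ℝ} (hq : 0 < q) (x y : ℝ) (n : ℕ) :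
    qnum q (x + y) ^ n = ∑ l ∈ range (n + 1),
      (n.choose l : ℝ) * qnum q x ^ (n - l) * q ^ ((l : ℝ) * x) * qnum q y ^ l := by
  rw [qnum_add hq, add_comm (qnum q x), add_pow]
  refine sum_congr rfl fun l _ => ?_
  rw [mul_pow, mul_comm (l : ℝ) x, Real.rpow_mul_natCast hq.le]
  ring

lemma tendsto_qnum_atTop {q : ℝ} (hq : |q| < 1) :
    Tendsto (qnum q) atTop (𝓝 (1 / (1 - q))) := by
  obtain ⟨hq_lower, hq_upper⟩ := abs_lt.mp hq
  have h_rpow : Tendsto (fun x : ℝ => q ^ x) atTop (𝓝 0) :=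
    tendsto_rpow_atTop_of_base_lt_one q hq_lower hq_upper
  have h_quot : Tendsto (fun x : ℝ => (1 - q ^ x) / (1 - q)) atTop (𝓝 (1 / (1 - q))) := by
    simpa only [sub_zero] using (h_rpow.const_sub 1).div_const (1 - q)
  exact h_quot

lemma summable_pow_mul_qnum_pow {q r : ℝ} (hq : |q| < 1) (hr : |r| < 1) (x : ℝ) (n : ℕ) :
    Summable fun m : ℕ => r ^ m * qnum q (m + x) ^ n := by
  have h_bounded : (fun m : ℕ => qnum q (m + x) ^ n) =O[atTop] (fun _ => (1 : ℝ)) :=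
    (((tendsto_qnum_atTop hq).comp
      (tendsto_atTop_add_const_right _ x tendsto_natCast_atTop_atTop)).pow n).isBigO_one ℝ
  refine summable_of_isBigO_nat (summable_geometric_of_abs_lt_one hr) ?_
  simpa only [mul_one] using (Asymptotics.isBigO_refl (fun m : ℕ => r ^ m) atTop).mul h_bounded

lemma qEuler_add {q : ℝ} (hq0 : 0 < q) (hq1 : q < 1) (n : ℕ) (x y : ℝ) :
    qEuler q n (x + y) = ∑ l ∈ range (n + 1),
      (n.choose l : ℝ) * qnum q x ^ (n - l) * q ^ ((l : ℝ) * x) * qEuler q l y := by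
  have hq : |q| < 1 := by rwa [abs_of_pos hq0]
  have h_term (m : ℕ) : (-q) ^ m * qnum q (m + (x + y)) ^ n = ∑ l ∈ range (n + 1),
      (n.choose l : ℝ) * qnum q x ^ (n - l) * q ^ ((l : ℝ) * x) *
        ((-q) ^ m * qnum q (m + y) ^ l) := by
    rw [add_left_comm, qnum_add_pow hq0, mul_sum]
    exact sum_congr rfl fun l _ => mul_left_comm _ _ _
  have h_summable (l : ℕ) : Summable fun m : ℕ => (-q) ^ m * qnum q (m + y) ^ l :=
    summable_pow_mul_qnum_pow hq (by rwa [abs_neg]) y l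
  unfold qEuler
  simp_rw [h_term]
  rw [Summable.tsum_finsetSum fun l _ => (h_summable l).mul_left _, mul_sum]
  refine sum_congr rfl fun l _ => ?_
  rw [tsum_mul_left, mul_left_comm]

theorem qChanghee_in_terms_of_qEuler_numbers (q x : ℝ) (hq0 : 0 < q) (hq1 : q < 1) (n : ℕ) :
    qChanghee q n x = ∑ k ∈ Finset.range (n + 1), ∑ l ∈ Finset.range (k + 1),
      (k.choose l : ℝ) * (S1 n k : ℝ) * (qnum q x) ^ (k - l) * q ^ ((l : ℝ) * x) *
        qEuler q l 0 := by
  have h_euler (k : ℕ) : qEuler q k x = ∑ l ∈ range (k + 1),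
      (k.choose l : ℝ) * qnum q x ^ (k - l) * q ^ ((l : ℝ) * x) * qEuler q l 0 := by
    simpa only [add_zero] using qEuler_add hq0 hq1 k x 0
  simp_rw [qChanghee, h_euler, mul_sum]
  exact sum_congr rfl fun k _ => sum_congr rfl fun l _ => by ring
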